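/- Let d ≥ 3 and let 𝔢 be a dispersion relation of class C³ satisfying condition (M). There exists a constant c(𝔢) > 0, depending only on 𝔢, such that for every potential V : Γ → ℝ with Φ_{2,2}(V) < c(𝔢), the operator H(𝔢,V) has no eigenvalues, i.e., N_pp[𝔢,V] = 0. -/

import Mathlib

open MeasureTheory Complex Real
open scoped ENNReal

noncomputable section

namespace LatSch

/-- The lattice `Γ = ℤ^d`. -/
abbrev Γd (d : ℕ) := Fin d → ℤ

/-- The Hilbert space `ℓ²(Γ)`. -/
abbrev L2 (d : ℕ) := lp (fun _ : Γd d => ℂ) 2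

/-- Euclidean norm of a lattice point. -/
def lnorm {d : ℕ} (x : Γd d) : ℝ := Real.sqrt (∑ i, ((x i : ℝ)) ^ 2)

/-- The standard basis vector `δ_x` of `ℓ²(Γ)`. -/
def delta {d : ℕ} (x : Γd d) : L2 d := lp.single 2 x 1

local notation "⟪" a ", " b "⟫" => @inner ℂ _ _ a b

/-- The cube `[-π, π]^d`, a fundamental domain of the torus. -/
def torusBox (d : ℕ) : Set (Fin d → ℝ) := Set.univ.pi fun _ => Set.Icc (-π) π

/-- `⟨p, m⟩` for `p ∈ ℝ^d`, `m ∈ ℤ^d`. -/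
def dotZ {d : ℕ} (p : Fin d → ℝ) (m : Γd d) : ℝ := ∑ i, p i * (m i : ℝ)

/-- Fourier coefficient `f̂(m) = (2π)^{-d} ∫_{[-π,π]^d} f(p) e^{i⟨p,m⟩} dp`. -/
def fCoeff {d : ℕ} (f : (Fin d → ℝ) → ℝ) (m : Γd d) : ℂ :=
  ((1 / (2 * π) ^ d : ℝ) : ℂ) *
    ∫ p in torusBox d, (f p : ℂ) * Complex.exp (Complex.I * (dotZ p m : ℝ))

/-- `H` is the Fourier multiplier (hopping matrix) `h(f)`, characterized by its
matrix elements `⟨δ_x, H δ_y⟩ = f̂(x - y)`. -/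
def IsMultiplier {d : ℕ} (f : (Fin d → ℝ) → ℝ) (H : L2 d →L[ℂ] L2 d) : Prop :=
  ∀ x y : Γd d, ⟪delta x, H (delta y)⟫ = fCoeff f (x - y)

/-- `M` is the operator of multiplication by the potential `V`. -/
def IsMulOp {d : ℕ} (V : Γd d → ℝ) (M : L2 d →L[ℂ] L2 d) : Prop :=
  ∀ (ψ : L2 d) (x : Γd d), (M ψ : ∀ _ : Γd d, ℂ) x = (V x : ℂ) * (ψ : ∀ _ : Γd d, ℂ) x

/-- Partial derivative `∂_{p_k} f (p)`. -/
def pd {d : ℕ} (f : (Fin d → ℝ) → ℝ) (k : Fin d) (p : Fin d → ℝ) : ℝ :=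
  fderiv ℝ f p (Pi.single k 1)

/-- `|∇f|²(p) = Σ_k (∂_{p_k} f(p))²`. -/
def gradSq {d : ℕ} (f : (Fin d → ℝ) → ℝ) (p : Fin d → ℝ) : ℝ := ∑ k, pd f k p ^ 2

/-- The Hessian matrix of `f` at `p`. -/
def hess {d : ℕ} (f : (Fin d → ℝ) → ℝ) (p : Fin d → ℝ) : Matrix (Fin d) (Fin d) ℝ :=
  Matrix.of fun i j => fderiv ℝ (fun q => fderiv ℝ f q (Pi.single j 1)) p (Pi.single i 1)

/-- All critical points of `f` are nondegenerate (`f` is a Morse function). -/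
def IsMorse {d : ℕ} (f : (Fin d → ℝ) → ℝ) : Prop :=
  ∀ p, fderiv ℝ f p = 0 → (hess f p).det ≠ 0

/-- `2πℤ^d`-periodicity. -/
def Periodic2pi {d : ℕ} (f : (Fin d → ℝ) → ℝ) : Prop :=
  ∀ (p : Fin d → ℝ) (m : Γd d), f (p + fun i => 2 * π * (m i : ℝ)) = f p

/-- A dispersion relation: a `2πℤ^d`-periodic function with minimum `0`. -/
def IsDispersion {d : ℕ} (f : (Fin d → ℝ) → ℝ) : Prop :=
  Periodic2pi f ∧ (∀ p, 0 ≤ f p) ∧ (∃ p, f p = 0)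

/-- Condition (M): `𝔢` and `|∇𝔢|²` are Morse functions. -/
def CondM {d : ℕ} (f : (Fin d → ℝ) → ℝ) : Prop := IsMorse f ∧ IsMorse (gradSq f)

/-- `Φ_{m,n}(V) = (Σ_x |V(x)|^{1/m} (1+|x|)^n)^m`, valued in `[0,∞]`. -/
def Phi {d : ℕ} (m n : ℕ) (V : Γd d → ℝ) : ℝ≥0∞ :=
  (∑' x : Γd d, ENNReal.ofReal (|V x| ^ ((1 : ℝ) / m) * (1 + lnorm x) ^ n)) ^ m

/-- The set of eigenvectors of `H` (with real eigenvalue). -/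
def eigvecs {d : ℕ} (H : L2 d →L[ℂ] L2 d) : Set (L2 d) :=
  {ψ : L2 d | ψ ≠ 0 ∧ ∃ μ : ℝ, H ψ = (μ : ℂ) • ψ}

/-- `N_pp[H]`: the Hilbert-space dimension of the closed linear span of all
eigenvectors of `H`. -/
def Npp {d : ℕ} (H : L2 d →L[ℂ] L2 d) : Cardinal :=
  Module.rank ℂ ((Submodule.span ℂ (eigvecs H)).topologicalClosure)

/-- The Fourier transform `ĝ_x(p) = (i/2·|∇𝔢(p)|² + ⟨∇𝔢(p), x⟩) e^{-i⟨p,x⟩}`. -/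
def ghat {d : ℕ} (e : (Fin d → ℝ) → ℝ) (x : Γd d) (p : Fin d → ℝ) : ℂ :=
  ((Complex.I / 2) * ((gradSq e p : ℝ) : ℂ) + ((∑ k, pd e k p * (x k : ℝ) : ℝ) : ℂ)) *
    Complex.exp (-(Complex.I * (dotZ p x : ℝ)))

/-- `g : Γ → ℓ²(Γ)` is the family of vectors `g_x` with Fourier transform `ĝ_x`. -/
def IsGVec {d : ℕ} (e : (Fin d → ℝ) → ℝ) (g : Γd d → L2 d) : Prop :=
  ∀ x m : Γd d,
    (g x : ∀ _ : Γd d, ℂ) m =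
      ((1 / (2 * π) ^ d : ℝ) : ℂ) *
        ∫ p in torusBox d, ghat e x p * Complex.exp (Complex.I * (dotZ p m : ℝ))

/-- `C` is the bounded self-adjoint realization
`C_V = Σ_x i V(x) (|δ_x⟩⟨g_x| - |g_x⟩⟨δ_x|)` of the commutator `i[V, A(𝔢)]`. -/
def IsCommOp {d : ℕ} (V : Γd d → ℝ) (g : Γd d → L2 d) (C : L2 d →L[ℂ] L2 d) : Prop :=
  ∀ ψ : L2 d,
    HasSum (fun x : Γd d =>
      (Complex.I * (V x : ℂ)) • (⟪g x, ψ⟫ • delta x - ⟪delta x, ψ⟫ • g x)) (C ψ)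

/-- `R` is the resolvent `(z - H)^{-1}`. -/
def IsResolventAt {d : ℕ} (H : L2 d →L[ℂ] L2 d) (z : ℂ) (R : L2 d →L[ℂ] L2 d) : Prop :=
  R.comp (z • (1 : L2 d →L[ℂ] L2 d) - H) = 1 ∧ (z • (1 : L2 d →L[ℂ] L2 d) - H).comp R = 1

/-- `‖f‖_{C^m} ≤ C`: all partial derivatives of order `≤ m` are bounded by `C`. -/
def CmNormLe {d : ℕ} (m : ℕ) (f : (Fin d → ℝ) → ℝ) (C : ℝ) : Prop :=
  ∀ j : ℕ, j ≤ m → ∀ (p : Fin d → ℝ) (k : Fin j → Fin d),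
    |iteratedFDeriv ℝ j f p (fun i => Pi.single (k i) 1)| ≤ C

/-- `K(𝔢) ≥ K`: at every critical point, every eigenvalue `λ` of the Hessian
satisfies `|λ|^{1/2} ≥ K`. -/
def MinCurvGe {d : ℕ} (f : (Fin d → ℝ) → ℝ) (K : ℝ) : Prop :=
  ∀ p, fderiv ℝ f p = 0 → ∀ (lam : ℝ) (v : Fin d → ℝ), v ≠ 0 →
    (hess f p).mulVec v = lam • v → K ^ 2 ≤ |lam|

/-- The set of thresholds `Thr(𝔢) = 𝔢(Crit(𝔢))`. -/
def Thr {d : ℕ} (f : (Fin d → ℝ) → ℝ) : Set ℝ := f '' {p | fderiv ℝ f p = 0}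


/-- The number of strictly negative eigenvalues of `C`, counted with multiplicity:
the dimension of the span of eigenvectors with strictly negative eigenvalue. -/
def NegCount {d : ℕ} (C : L2 d →L[ℂ] L2 d) : Cardinal :=
  Module.rank ℂ (Submodule.span ℂ
    {ψ : L2 d | ψ ≠ 0 ∧ ∃ μ : ℝ, μ < 0 ∧ C ψ = (μ : ℂ) • ψ})

/-- The number of strictly positive eigenvalues of `C`, counted with multiplicity. -/
def PosCount {d : ℕ} (C : L2 d →L[ℂ] L2 d) : Cardinal :=
  Module.rank ℂ (Submodule.span ℂ
    {ψ : L2 d | ψ ≠ 0 ∧ ∃ μ : ℝ, 0 < μ ∧ C ψ = (μ : ℂ) • ψ})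

/-!
Fourier series turn an eigenvector `ψ` of `h(𝔢) + V` with eigenvalue `μ` into `u ∈ L²` of the torus
with `(E - μ) u = Φ`, where `E` is the rescaled symbol and `Φ` is the trigonometric series with
coefficients `-V ψ`. As `|ψ| ≤ ‖u‖₁`, both `Φ` and `∇Φ` are bounded by a constant times
`S ‖u‖₁`, with `S = Σ_x |V(x)| (1 + |x|)`.

The vector field `F_ε(E - μ) |Φ|² ∇E`, with `F_ε(t) = t / (t² + ε²)` regularizing `1 / t`, has
divergence of integral zero. Letting `ε → 0`, the term containing `F_ε'` tends to `-|∇E|² |u|²`,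
because `Φ = (E - μ) u` and because `∇E = 0` almost everywhere on the level set `E = μ`. In the
other terms `F_ε(E - μ)` turns one factor `Φ` into a factor bounded by `|u|`, so that
`∫ |∇E|² |u|² ≤ C S ‖u‖₁²`.

Since `E` is a Morse function, `|∇E|⁻²` has only singularities of type `|q|⁻²`, which are integrable
for `d ≥ 3`, and the Cauchy–Schwarz inequality gives `‖u‖₁² ≤ K S ‖u‖₁²`. Hence `u = 0` if
`K S < 1`.
-/

section LevelSets

open Filter Topology

variable {E F : Type*} [NormedAddCommGroup E] [NormedSpace ℝ E] [NormedAddCommGroup F]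
  [NormedSpace ℝ F]

lemma ae_eq_imp_deriv_eq_zero (f : ℝ → F) (c : F) : ∀ᵐ t, f t = c → deriv f t = 0 := by
  refine measure_null_of_locally_null _ fun t ht => ⟨{t}, ?_, Real.volume_singleton⟩
  obtain ⟨-, hderiv⟩ := Classical.not_imp.1 ht
  have hisolated := (differentiableAt_of_deriv_ne_zero hderiv).hasDerivAt.eventually_ne
    (c := c) hderiv
  rw [eventually_nhdsWithin_iff] at hisolated
  filter_upwards [nhdsWithin_le_nhds hisolated, self_mem_nhdsWithin] with s hs hsc
  exact not_not.1 fun hst => hs hst (Classical.not_imp.1 hsc).1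

lemma ae_eq_imp_lineDeriv_eq_zero [CompleteSpace F] [FiniteDimensional ℝ E] [MeasurableSpace E]
    [BorelSpace E] (μ : Measure E) [μ.IsAddHaarMeasure] {f : E → F} (hf : Continuous f) (c : F)
    (v : E) :
    ∀ᵐ x ∂μ, f x = c → lineDeriv ℝ f x v = 0 := by
  have hmeas : MeasurableSet {x | f x = c → lineDeriv ℝ f x v = 0} := by
    have hlevel : MeasurableSet {x | f x = c} := (isClosed_singleton.preimage hf).measurableSet
    have hderiv : MeasurableSet {x | lineDeriv ℝ f x v = 0} :=
      (stronglyMeasurable_lineDeriv hf).measurableSet_eq_fun stronglyMeasurable_const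
    exact hlevel.imp hderiv
  refine ae_mem_of_ae_add_linearMap_mem (LinearMap.toSpanSingleton ℝ E v) volume μ hmeas
    fun x => ?_
  filter_upwards [ae_eq_imp_deriv_eq_zero (fun t => f (x + t • v)) c] with t ht hc
  have hshift : lineDeriv ℝ f (x + t • v) v = deriv (fun s => f (x + s • v)) t := by
    rw [lineDeriv, ← zero_add t, ← deriv_comp_add_const]
    simp only [add_assoc, ← add_smul, add_comm t, zero_add]
  simpa [hshift] using ht hc

end LevelSets

section NegativePowers

open Filter Topology

variable {E F : Type*} [NormedAddCommGroup E] [NormedSpace ℝ E] [FiniteDimensional ℝ E]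
  [NormedAddCommGroup F] [NormedSpace ℝ F]

lemma isBigO_sub_of_hasFDerivAt {g : E → F} {g' : E →L[ℝ] F} {x₀ : E}
    (hg : HasFDerivAt g g' x₀) (hinj : Function.Injective g') (hx₀ : g x₀ = 0) :
    (fun x => ‖x - x₀‖) =O[𝓝 x₀] fun x => ‖g x‖ := by
  have hind : IsInducing g' :=
    (LinearMap.isClosedEmbedding_of_injective (LinearMap.ker_eq_bot.2 hinj)).isInducing
  simpa [hx₀] using (hg.isTheta_sub hind).2.norm_norm

variable [MeasurableSpace E] [BorelSpace E] (μ : Measure E) [μ.IsAddHaarMeasure]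

lemma integrableAtFilter_norm_sub_pow_inv {k : ℕ} (hk : k < Module.finrank ℝ E) (x₀ : E) :
    IntegrableAtFilter (fun x => (‖x - x₀‖ ^ k)⁻¹) (𝓝 x₀) μ := by
  have hloc : LocallyIntegrable (fun x : E => (‖x‖ ^ k)⁻¹) μ := by
    refine locallyIntegrable_of_norm_le_rpow (C := 1) (α := k) (by lia) (by exact_mod_cast hk)
      (.of_forall fun x => ?_) (by fun_prop)
    rw [Real.norm_of_nonneg (by positivity), Real.rpow_neg (norm_nonneg x), Real.rpow_natCast,
      one_mul]
  obtain ⟨s, hs, hints⟩ := hloc 0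
  refine ⟨(· - x₀) ⁻¹' s, (continuous_sub_right x₀).continuousAt.preimage_mem_nhds (by simpa), ?_⟩
  exact ((measurePreserving_sub_right μ x₀).integrableOn_comp_preimage
    (MeasurableEquiv.subRight x₀).measurableEmbedding).2 hints

variable {g : E → F} (hzero : ∀ x, g x = 0 → ∃ g' : E →L[ℝ] F, HasFDerivAt g g' x ∧
  Function.Injective g')

include hzero

lemma locallyIntegrable_norm_pow_inv {k : ℕ} (hk : k < Module.finrank ℝ E) (hg : Continuous g) :
    LocallyIntegrable (fun x => (‖g x‖ ^ k)⁻¹) μ := by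
  have hmeas : StronglyMeasurable fun x => (‖g x‖ ^ k)⁻¹ :=
    (hg.norm.pow k).measurable.inv.stronglyMeasurable
  intro x₀
  by_cases hx₀ : g x₀ = 0
  · obtain ⟨g', hg', hinj⟩ := hzero x₀ hx₀
    have hbigO : (fun x => (‖g x‖ ^ k)⁻¹) =O[𝓝 x₀] fun x => (‖x - x₀‖ ^ k)⁻¹ := by
      refine ((isBigO_sub_of_hasFDerivAt hg' hinj hx₀).pow k).inv_rev (.of_forall fun x hx => ?_)
      obtain ⟨hxx₀, hk₀⟩ := pow_eq_zero_iff'.1 hx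
      rw [sub_eq_zero.1 (norm_eq_zero.1 hxx₀), hx₀, norm_zero, zero_pow hk₀]
    exact hbigO.integrableAtFilter hmeas.stronglyMeasurableAtFilter
      (integrableAtFilter_norm_sub_pow_inv μ hk x₀)
  · have hcont : ContinuousAt (fun x => (‖g x‖ ^ k)⁻¹) x₀ :=
      (hg.norm.pow k).continuousAt.inv₀ (pow_ne_zero k (norm_ne_zero_iff.2 hx₀))
    exact hcont.integrableAtFilter hmeas.stronglyMeasurableAtFilter (μ.finiteAt_nhds x₀)

lemma ae_ne_zero_of_injective_fderiv [Nontrivial E] : ∀ᵐ x ∂μ, g x ≠ 0 := by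
  refine measure_null_of_locally_null _ fun x hx => ⟨{x}, ?_, measure_singleton x⟩
  obtain ⟨g', hg', hinj⟩ := hzero x (not_not.1 hx)
  filter_upwards [nhdsWithin_le_nhds
    (isBigO_sub_of_hasFDerivAt hg' hinj (not_not.1 hx)).eq_zero_imp, self_mem_nhdsWithin]
    with y hy hgy
  simpa [sub_eq_zero] using hy (by simpa using hgy)

end NegativePowers

section CauchySchwarz

lemma sq_integral_le_integral_inv_mul_integral {α : Type*} [MeasurableSpace α] {μ : Measure α}
    {f G : α → ℝ} (hG : ∀ᵐ a ∂μ, 0 < G a) (hf : Integrable f μ)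
    (hGinv : Integrable (fun a => (G a)⁻¹) μ) (hGf : Integrable (fun a => G a * f a ^ 2) μ) :
    (∫ a, f a ∂μ) ^ 2 ≤ (∫ a, (G a)⁻¹ ∂μ) * ∫ a, G a * f a ^ 2 ∂μ := by
  have hquadratic : ∀ t : ℝ, 0 ≤ (∫ a, G a * f a ^ 2 ∂μ) * (t * t) + (-2 * ∫ a, f a ∂μ) * t
      + ∫ a, (G a)⁻¹ ∂μ := fun t => calc
    0 ≤ ∫ a, G a * (t * f a - (G a)⁻¹) ^ 2 ∂μ :=
      integral_nonneg_of_ae (hG.mono fun a ha => mul_nonneg ha.le (sq_nonneg _))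
    _ = ∫ a, G a * f a ^ 2 * (t * t) + -2 * f a * t + (G a)⁻¹ ∂μ :=
      integral_congr_ae (hG.mono fun a ha => by field_simp; ring)
    _ = _ := by
      rw [integral_add ((hGf.mul_const _).fun_add ((hf.const_mul _).mul_const _)) hGinv,
        integral_add (hGf.mul_const _) ((hf.const_mul _).mul_const _), integral_mul_const,
        integral_mul_const, integral_const_mul]
  have hdiscrim := discrim_le_zero hquadratic
  rw [discrim] at hdiscrim
  linarith

end CauchySchwarz

section Lattice

variable {d : ℕ}

section UnitCell

/-- The half-open unit cell `(-1/2, 1/2]^d`; the upper endpoint is written `-1/2 + 1` to agree with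
`UnitAddTorus.integral_preimage`. -/
def unitCell (d : ℕ) : Set (Fin d → ℝ) := {q | ∀ i, q i ∈ Set.Ioc (-1 / 2 : ℝ) (-1 / 2 + 1)}

lemma measurableSet_unitCell (d : ℕ) : MeasurableSet (unitCell d) :=
  MeasurableSet.univ_pi' fun _ => measurableSet_Ioc

lemma unitCell_subset_Icc (d : ℕ) :
    unitCell d ⊆ Set.Icc (fun _ => (-1 / 2 : ℝ)) (fun _ => -1 / 2 + 1) :=
  fun _ hq => ⟨fun i => (hq i).1.le, fun i => (hq i).2⟩

lemma unitCell_ae_eq_Icc (d : ℕ) :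
    unitCell d =ᵐ[volume] Set.Icc (fun _ => (-1 / 2 : ℝ)) (fun _ => -1 / 2 + 1) := by
  have hpi : unitCell d = Set.univ.pi fun _ => Set.Ioc (-1 / 2 : ℝ) (-1 / 2 + 1) := by
    ext; simp [unitCell]
  exact hpi ▸ Measure.univ_pi_Ioc_ae_eq_Icc

/-- Lebesgue measure on the unit cell, a model of the Haar measure of the torus `ℝ^d / ℤ^d`. -/
def cellMeasure (d : ℕ) : Measure (Fin d → ℝ) := volume.restrict (unitCell d)

lemma cellMeasure_eq_restrict_Icc (d : ℕ) : cellMeasure d =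
    volume.restrict (Set.Icc (fun _ => (-1 / 2 : ℝ)) (fun _ => -1 / 2 + 1)) :=
  Measure.restrict_congr_set (unitCell_ae_eq_Icc d)

instance (d : ℕ) : IsFiniteMeasure (cellMeasure d) := by
  rw [cellMeasure_eq_restrict_Icc]
  exact ⟨by rw [Measure.restrict_apply_univ]; exact isCompact_Icc.measure_lt_top⟩

lemma ae_mem_unitCell (d : ℕ) : ∀ᵐ q ∂cellMeasure d, q ∈ unitCell d :=
  ae_restrict_mem (measurableSet_unitCell d)

lemma integrable_cellMeasure {X : Type*} [NormedAddCommGroup X] {f : (Fin d → ℝ) → X}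
    (hf : LocallyIntegrable f) : Integrable f (cellMeasure d) := by
  rw [cellMeasure_eq_restrict_Icc]
  exact hf.integrableOn_isCompact isCompact_Icc

lemma exists_norm_le_on_unitCell {X : Type*} [NormedAddCommGroup X] {f : (Fin d → ℝ) → X}
    (hf : Continuous f) : ∃ C, ∀ q ∈ unitCell d, ‖f q‖ ≤ C := by
  obtain ⟨C, hC⟩ := isCompact_Icc.exists_bound_of_continuousOn hf.continuousOn
  exact ⟨C, fun q hq => hC q (unitCell_subset_Icc d hq)⟩

end UnitCell

section PartialDerivatives

/-- The Laplacian `Σ_k ∂_k² f`. -/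
def laplacian (f : (Fin d → ℝ) → ℝ) (q : Fin d → ℝ) : ℝ := ∑ k, pd (pd f k) k q

variable {f : (Fin d → ℝ) → ℝ}

lemma continuous_pd (hf : ContDiff ℝ 1 f) (k : Fin d) : Continuous (pd f k) :=
  (hf.continuous_fderiv one_ne_zero).clm_apply continuous_const

lemma contDiff_pd (hf : ContDiff ℝ 2 f) (k : Fin d) : ContDiff ℝ 1 (pd f k) :=
  (hf.fderiv_right (m := 1) (by norm_num)).clm_apply contDiff_const

lemma continuous_gradSq (hf : ContDiff ℝ 1 f) : Continuous (gradSq f) :=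
  continuous_finsetSum _ fun k _ => (continuous_pd hf k).pow 2

lemma continuous_laplacian (hf : ContDiff ℝ 2 f) : Continuous (laplacian f) :=
  continuous_finsetSum _ fun k _ => continuous_pd (contDiff_pd hf k) k

lemma gradSq_nonneg (f : (Fin d → ℝ) → ℝ) (q : Fin d → ℝ) : 0 ≤ gradSq f q :=
  Finset.sum_nonneg fun _ _ => sq_nonneg _

lemma pd_mul {g : (Fin d → ℝ) → ℝ} {q : Fin d → ℝ} (hf : DifferentiableAt ℝ f q)
    (hg : DifferentiableAt ℝ g q) (k : Fin d) :
    pd (fun q => f q * g q) k q = f q * pd g k q + g q * pd f k q := by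
  simp [pd, fderiv_fun_mul hf hg]

lemma pd_comp {F : ℝ → ℝ} {q : Fin d → ℝ} (hF : DifferentiableAt ℝ F (f q))
    (hf : DifferentiableAt ℝ f q) (k : Fin d) :
    pd (fun q => F (f q)) k q = deriv F (f q) * pd f k q := by
  have hchain := hF.hasDerivAt.comp_hasFDerivAt q hf.hasFDerivAt
  exact DFunLike.congr_fun hchain.fderiv (Pi.single k 1)

lemma pd_sub_const (f : (Fin d → ℝ) → ℝ) (c : ℝ) (k : Fin d) :
    pd (fun q => f q - c) k = pd f k := by
  funext q
  rw [pd, fderiv_sub_const, pd]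

lemma gradSq_sub_const (f : (Fin d → ℝ) → ℝ) (c : ℝ) : gradSq (fun q => f q - c) = gradSq f := by
  funext q
  simp only [gradSq, pd_sub_const]

lemma laplacian_sub_const (f : (Fin d → ℝ) → ℝ) (c : ℝ) :
    laplacian (fun q => f q - c) = laplacian f := by
  funext q
  simp only [laplacian, pd_sub_const]

lemma ae_eq_imp_gradSq_eq_zero (hf : ContDiff ℝ 1 f) (c : ℝ) :
    ∀ᵐ q, f q = c → gradSq f q = 0 := by
  filter_upwards [eventually_countable_forall.2 fun k : Fin d =>
    ae_eq_imp_lineDeriv_eq_zero volume hf.continuous c (Pi.single k 1)] with q hq hc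
  refine Finset.sum_eq_zero fun k _ => ?_
  rw [pd, ← (hf.differentiable one_ne_zero q).lineDeriv_eq_fderiv, hq k hc, zero_pow two_ne_zero]

end PartialDerivatives

section Periodic

/-- `ℤ^d`-periodicity. -/
def LatticePeriodic {X : Type*} (f : (Fin d → ℝ) → X) : Prop :=
  ∀ m : Γd d, Function.Periodic f fun i => (m i : ℝ)

lemma LatticePeriodic.pd {f : (Fin d → ℝ) → ℝ} (hf : LatticePeriodic f) (k : Fin d) :
    LatticePeriodic (pd f k) := fun m q => by
  rw [LatSch.pd, ← fderiv_comp_add_right, (hf m).funext, LatSch.pd]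

lemma integral_divergence_eq_zero {v : Fin d → (Fin d → ℝ) → ℝ} (hv : ∀ i, ContDiff ℝ 1 (v i))
    (hper : ∀ i, LatticePeriodic (v i)) : ∫ q, ∑ i, pd (v i) i q ∂cellMeasure d = 0 := by
  rcases d with _ | n
  · simp
  have hdivergence := integral_divergence_of_hasFDerivAt_off_countable'
    (fun _ => (-1 / 2 : ℝ)) (fun _ => -1 / 2 + 1) (fun _ => by norm_num) v
    (fun i q => fderiv ℝ (v i) q) ∅ Set.countable_empty
    (fun i => (hv i).continuous.continuousOn)
    (fun q _ i => ((hv i).differentiable one_ne_zero q).hasFDerivAt)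
    (continuous_finsetSum _ fun i _ => continuous_pd (hv i) i).integrableOn_Icc
  rw [cellMeasure_eq_restrict_Icc]
  refine hdivergence.trans (Finset.sum_eq_zero fun i _ => sub_eq_zero.2 ?_)
  congr 1
  funext x
  have hopposite : i.insertNth (-1 / 2 + 1) x =
      (i.insertNth (-1 / 2) x : Fin (n + 1) → ℝ) +
        fun j => ((Pi.single i 1 : Γd (n + 1)) j : ℝ) := by
    funext j
    refine Fin.succAboveCases i ?_ (fun j => ?_) j <;> simp
  rw [hopposite, hper i]

end Periodic

section RegularizedInverse

open Filter Topology

/-- The regularisation `t / (t² + ε²)` of `1 / t`. -/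
def regInv (ε t : ℝ) : ℝ := t / (t ^ 2 + ε ^ 2)

variable {ε : ℝ} (hε : ε ≠ 0)

include hε

lemma contDiff_regInv {n : WithTop ℕ∞} : ContDiff ℝ n (regInv ε) :=
  contDiff_id.div ((contDiff_id.pow 2).add contDiff_const) fun t => by positivity

lemma deriv_regInv (t : ℝ) : deriv (regInv ε) t = (ε ^ 2 - t ^ 2) / (t ^ 2 + ε ^ 2) ^ 2 := by
  have hden : t ^ 2 + ε ^ 2 ≠ 0 := by positivity
  have hderiv := (hasDerivAt_id t).div (((hasDerivAt_id t).pow 2).add_const (ε ^ 2)) hden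
  refine hderiv.deriv.trans ?_
  simp only [id, Pi.pow_apply, Nat.cast_ofNat]
  congr 1
  ring

lemma abs_regInv_mul_abs_le_one (t : ℝ) : |regInv ε t| * |t| ≤ 1 := by
  have hpos : 0 < t ^ 2 + ε ^ 2 := by positivity
  rw [regInv, abs_div, abs_of_pos hpos, div_mul_eq_mul_div, div_le_one hpos, abs_mul_abs_self]
  nlinarith [sq_nonneg ε]

lemma abs_sq_mul_deriv_regInv_le_one (t : ℝ) : |t ^ 2 * deriv (regInv ε) t| ≤ 1 := by
  have hpos : 0 < t ^ 2 + ε ^ 2 := by positivity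
  rw [deriv_regInv hε, mul_div_assoc', abs_div, abs_of_pos (pow_pos hpos 2),
    div_le_one (pow_pos hpos 2), abs_le]
  constructor <;> nlinarith [mul_nonneg (sq_nonneg t) (sq_nonneg ε), sq_nonneg (ε ^ 2)]

omit hε in
lemma tendsto_sq_mul_deriv_regInv {t : ℝ} (ht : t ≠ 0) :
    Tendsto (fun ε => t ^ 2 * deriv (regInv ε) t) (𝓝[≠] 0) (𝓝 (-1)) := by
  have hcont : ContinuousAt (fun ε : ℝ => t ^ 2 * ((ε ^ 2 - t ^ 2) / (t ^ 2 + ε ^ 2) ^ 2)) 0 := by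
    exact continuousAt_const.mul (ContinuousAt.div (by fun_prop) (by fun_prop) (by positivity))
  have hvalue : t ^ 2 * ((0 ^ 2 - t ^ 2) / (t ^ 2 + 0 ^ 2) ^ 2) = -1 := by field_simp; ring
  refine Tendsto.congr' ?_ (hvalue ▸ hcont.tendsto.mono_left nhdsWithin_le_nhds)
  filter_upwards [self_mem_nhdsWithin] with ε hε
  rw [deriv_regInv hε]

end RegularizedInverse

section Virial

open Filter Topology

variable {E : (Fin d → ℝ) → ℝ} (hE : ContDiff ℝ 2 E) (hEper : LatticePeriodic E)

include hE hEper

lemma integral_virial_eq_zero {w : (Fin d → ℝ) → ℝ} (hw : ContDiff ℝ 1 w)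
    (hwper : LatticePeriodic w) {F : ℝ → ℝ} (hF : ContDiff ℝ 1 F) :
    ∫ q, F (E q) * (∑ k, pd w k q * pd E k q + w q * laplacian E q)
      + w q * gradSq E q * deriv F (E q) ∂cellMeasure d = 0 := by
  have hE₁ : ContDiff ℝ 1 E := hE.of_le (by norm_num)
  have hproduct : ∀ k q, pd (fun q => F (E q) * (w q * pd E k q)) k q =
      F (E q) * (pd w k q * pd E k q + w q * pd (pd E k) k q)
        + w q * pd E k q ^ 2 * deriv F (E q) := by
    intro k q
    have hEq : DifferentiableAt ℝ E q := hE₁.differentiable one_ne_zero q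
    have hwq : DifferentiableAt ℝ w q := hw.differentiable one_ne_zero q
    have hpdq : DifferentiableAt ℝ (pd E k) q := (contDiff_pd hE k).differentiable one_ne_zero q
    have hFq : DifferentiableAt ℝ F (E q) := hF.differentiable one_ne_zero (E q)
    rw [pd_mul (hFq.fun_comp' q hEq) (hwq.fun_mul hpdq), pd_mul hwq hpdq, pd_comp hFq hEq]
    ring
  rw [← integral_divergence_eq_zero (v := fun k q => F (E q) * (w q * pd E k q))
    (fun k => (hF.comp hE₁).mul (hw.mul (contDiff_pd hE k)))
    (fun k m q => by simp only [hEper m q, hwper m q, hEper.pd k m q])]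
  simp only [hproduct, Finset.sum_add_distrib, gradSq, laplacian, ← Finset.mul_sum,
    ← Finset.sum_mul]

omit hE hEper in
lemma integrable_gradSq_mul_norm_sq (hE : ContDiff ℝ 1 E) {X : Type*} [NormedAddCommGroup X]
    {u : (Fin d → ℝ) → X} (hu : MemLp u 2 (cellMeasure d)) :
    Integrable (fun q => gradSq E q * ‖u q‖ ^ 2) (cellMeasure d) := by
  obtain ⟨C, hC⟩ := exists_norm_le_on_unitCell (continuous_gradSq hE)
  exact (hu.integrable_norm_pow two_ne_zero).bdd_mul
    (continuous_gradSq hE).aestronglyMeasurable ((ae_mem_unitCell d).mono hC)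

variable {H : Type*} [NormedAddCommGroup H] [InnerProductSpace ℝ H] {Φ u : (Fin d → ℝ) → H}
  (hΦ : ContDiff ℝ 1 Φ) (hΦper : LatticePeriodic Φ) {C P : ℝ}
  (hC : ∀ q ∈ unitCell d, 2 * ∑ k, |pd E k q| + |laplacian E q| ≤ C)
  (hP : ∀ q, ‖Φ q‖ ≤ P) (hP' : ∀ q k, ‖fderiv ℝ Φ q (Pi.single k 1)‖ ≤ P)

omit hE hEper in
include hΦ hC hP hP' in
lemma abs_sum_pd_normSq_mul_pd_add_le {q : Fin d → ℝ} (hq : q ∈ unitCell d) :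
    |∑ k, pd (fun q => ‖Φ q‖ ^ 2) k q * pd E k q + ‖Φ q‖ ^ 2 * laplacian E q|
      ≤ C * P * ‖Φ q‖ := by
  have hP₀ : 0 ≤ P := (norm_nonneg _).trans (hP q)
  have hpd : ∀ k, |pd (fun q => ‖Φ q‖ ^ 2) k q| ≤ 2 * P * ‖Φ q‖ := fun k => by
    have hderiv := (hΦ.differentiable one_ne_zero q).hasFDerivAt.norm_sq
    rw [pd, hderiv.fderiv]
    simp only [smul_apply, ContinuousLinearMap.comp_apply,
      innerSL_apply_apply, nsmul_eq_mul, Nat.cast_ofNat, abs_mul, Nat.abs_ofNat]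
    nlinarith [abs_real_inner_le_norm (Φ q) (fderiv ℝ Φ q (Pi.single k 1)), hP' q k,
      norm_nonneg (Φ q)]
  calc _ ≤ |∑ k, pd (fun q => ‖Φ q‖ ^ 2) k q * pd E k q| + |‖Φ q‖ ^ 2 * laplacian E q| :=
        abs_add_le _ _
    _ ≤ ∑ k, |pd (fun q => ‖Φ q‖ ^ 2) k q| * |pd E k q| + ‖Φ q‖ ^ 2 * |laplacian E q| := by
        rw [abs_mul (‖Φ q‖ ^ 2), abs_of_nonneg (by positivity : 0 ≤ ‖Φ q‖ ^ 2)]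
        gcongr
        simp only [← abs_mul]
        exact Finset.abs_sum_le_sum_abs _ _
    _ ≤ ∑ k, 2 * P * ‖Φ q‖ * |pd E k q| + P * ‖Φ q‖ * |laplacian E q| := by
        have hsq : ‖Φ q‖ ^ 2 ≤ P * ‖Φ q‖ := by nlinarith [hP q, norm_nonneg (Φ q)]
        gcongr with k
        exact hpd k
    _ = (2 * ∑ k, |pd E k q| + |laplacian E q|) * P * ‖Φ q‖ := by
        rw [← Finset.mul_sum]
        ring
    _ ≤ C * P * ‖Φ q‖ := by
        have := hC q hq
        gcongr

include hΦ hΦper hC hP hP'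

lemma neg_integral_mul_deriv_regInv_le (hu : Integrable u (cellMeasure d))
    (hEu : ∀ᵐ q ∂cellMeasure d, E q • u q = Φ q) {ε : ℝ} (hε : ε ≠ 0) :
    -∫ q, ‖Φ q‖ ^ 2 * gradSq E q * deriv (regInv ε) (E q) ∂cellMeasure d
      ≤ C * P * ∫ q, ‖u q‖ ∂cellMeasure d := by
  have hE₁ : ContDiff ℝ 1 E := hE.of_le (by norm_num)
  have hw : ContDiff ℝ 1 fun q => ‖Φ q‖ ^ 2 := hΦ.norm_sq ℝ
  have hF : ContDiff ℝ 1 (regInv ε) := contDiff_regInv hε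
  have hflux : Continuous fun q => regInv ε (E q) *
      (∑ k, pd (fun q => ‖Φ q‖ ^ 2) k q * pd E k q + ‖Φ q‖ ^ 2 * laplacian E q) :=
    (hF.continuous.comp hE.continuous).mul ((continuous_finsetSum _ fun k _ =>
      (continuous_pd hw k).mul (continuous_pd hE₁ k)).add
        (hw.continuous.mul (continuous_laplacian hE)))
  have hmain : Continuous fun q => ‖Φ q‖ ^ 2 * gradSq E q * deriv (regInv ε) (E q) :=
    (hw.continuous.mul (continuous_gradSq hE₁)).mul
      ((hF.continuous_deriv le_rfl).comp hE.continuous)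
  have hvirial := integral_virial_eq_zero hE hEper hw
    (fun m q => by simp only [hΦper m q]) hF
  rw [integral_add (integrable_cellMeasure hflux.locallyIntegrable)
    (integrable_cellMeasure hmain.locallyIntegrable)] at hvirial
  rw [← eq_neg_of_add_eq_zero_left hvirial, ← integral_const_mul]
  refine integral_mono_ae (integrable_cellMeasure hflux.locallyIntegrable) (hu.norm.const_mul _) ?_
  filter_upwards [hEu, ae_mem_unitCell d] with q hq hcell
  have hP₀ : 0 ≤ P := (norm_nonneg _).trans (hP q)
  have hC₀ : 0 ≤ C := le_trans (by positivity) (hC q hcell)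
  have hinv := abs_regInv_mul_abs_le_one hε (E q)
  calc _ ≤ |regInv ε (E q)| * (C * P * ‖Φ q‖) := by
        refine (le_abs_self _).trans ?_
        rw [abs_mul]
        gcongr
        exact abs_sum_pd_normSq_mul_pd_add_le hΦ hC hP hP' hcell
    _ = C * P * (|regInv ε (E q)| * |E q| * ‖u q‖) := by
        rw [← hq, norm_smul, Real.norm_eq_abs]
        ring
    _ ≤ C * P * ‖u q‖ := by
        gcongr
        exact mul_le_of_le_one_left (norm_nonneg _) hinv

lemma integral_gradSq_mul_norm_sq_le (hu : MemLp u 2 (cellMeasure d))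
    (hEu : ∀ᵐ q ∂cellMeasure d, E q • u q = Φ q) :
    ∫ q, gradSq E q * ‖u q‖ ^ 2 ∂cellMeasure d ≤ C * P * ∫ q, ‖u q‖ ∂cellMeasure d := by
  have hE₁ : ContDiff ℝ 1 E := hE.of_le (by norm_num)
  have hweight : ∀ᵐ q ∂cellMeasure d, ∀ ε,
      -(‖Φ q‖ ^ 2 * gradSq E q * deriv (regInv ε) (E q)) =
        gradSq E q * ‖u q‖ ^ 2 * -(E q ^ 2 * deriv (regInv ε) (E q)) := by
    filter_upwards [hEu] with q hq ε
    rw [← hq, norm_smul, mul_pow, Real.norm_eq_abs, sq_abs]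
    ring
  have hlim : Tendsto
      (fun ε => ∫ q, -(‖Φ q‖ ^ 2 * gradSq E q * deriv (regInv ε) (E q)) ∂cellMeasure d) (𝓝[≠] 0)
      (𝓝 (∫ q, gradSq E q * ‖u q‖ ^ 2 ∂cellMeasure d)) := by
    refine tendsto_integral_filter_of_dominated_convergence _ ?_ ?_
      (integrable_gradSq_mul_norm_sq hE₁ hu) ?_
    · filter_upwards [self_mem_nhdsWithin] with ε hε
      have hderiv := ((contDiff_regInv hε).continuous_deriv le_rfl).comp hE.continuous
      exact (((hΦ.continuous.norm.pow 2).mul (continuous_gradSq hE₁)).mul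
        hderiv).neg.aestronglyMeasurable
    · filter_upwards [self_mem_nhdsWithin] with ε hε
      filter_upwards [hweight] with q hq
      have hnonneg : 0 ≤ gradSq E q * ‖u q‖ ^ 2 := mul_nonneg (gradSq_nonneg E q) (by positivity)
      rw [hq, norm_mul, norm_neg, Real.norm_of_nonneg hnonneg, Real.norm_eq_abs]
      exact mul_le_of_le_one_right hnonneg (abs_sq_mul_deriv_regInv_le_one hε _)
    · filter_upwards [hweight, ae_restrict_of_ae (ae_eq_imp_gradSq_eq_zero hE₁ 0)] with q hq hlevel
      simp only [hq]
      by_cases hzero : E q = 0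
      · simp [hlevel hzero]
      · simpa using (tendsto_sq_mul_deriv_regInv hzero).neg.const_mul (gradSq E q * ‖u q‖ ^ 2)
  refine le_of_tendsto hlim ?_
  filter_upwards [self_mem_nhdsWithin] with ε hε
  rw [integral_neg]
  exact neg_integral_mul_deriv_regInv_le hE hEper hΦ hΦper hC hP hP'
    (hu.integrable one_le_two) hEu hε

end Virial

section PlaneWaves

lemma lnorm_nonneg (x : Γd d) : 0 ≤ lnorm x := Real.sqrt_nonneg _

lemma one_add_lnorm_nonneg (x : Γd d) : 0 ≤ 1 + lnorm x := add_nonneg zero_le_one (lnorm_nonneg x)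

lemma abs_le_lnorm (x : Γd d) (i : Fin d) : |(x i : ℝ)| ≤ lnorm x :=
  Real.abs_le_sqrt <|
    Finset.single_le_sum (f := fun i => (x i : ℝ) ^ 2) (fun _ _ => sq_nonneg _) (Finset.mem_univ i)

lemma dotZ_add (q : Fin d → ℝ) (x y : Γd d) : dotZ q (x + y) = dotZ q x + dotZ q y := by
  simp [dotZ, mul_add, Finset.sum_add_distrib]

lemma dotZ_neg (q : Fin d → ℝ) (x : Γd d) : dotZ q (-x) = -dotZ q x := by
  simp [dotZ]

lemma smul_dotZ (c : ℝ) (q : Fin d → ℝ) (x : Γd d) : dotZ (c • q) x = c * dotZ q x := by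
  simp only [dotZ, Pi.smul_apply, smul_eq_mul, Finset.mul_sum, mul_assoc]

/-- The linear functional `⟨·, x⟩` as a complex-valued continuous real-linear map. -/
def dotZCLM (x : Γd d) : (Fin d → ℝ) →L[ℝ] ℂ :=
  Complex.ofRealCLM ∘L ∑ i, (x i : ℝ) • ContinuousLinearMap.proj (R := ℝ) (φ := fun _ => ℝ) i

lemma dotZCLM_apply (x : Γd d) (q : Fin d → ℝ) : dotZCLM x q = dotZ q x := by
  simp [dotZCLM, dotZ, mul_comm]

lemma norm_dotZCLM_le (x : Γd d) : ‖dotZCLM x‖ ≤ d * lnorm x := by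
  refine ContinuousLinearMap.opNorm_le_bound _ (mul_nonneg d.cast_nonneg (lnorm_nonneg x))
    fun q => ?_
  calc ‖dotZCLM x q‖ = |∑ i, q i * (x i : ℝ)| := by
        rw [dotZCLM_apply, Complex.norm_real, Real.norm_eq_abs, dotZ]
    _ ≤ ∑ i, |q i * (x i : ℝ)| := Finset.abs_sum_le_sum_abs _ _
    _ ≤ ∑ _i : Fin d, lnorm x * ‖q‖ := by
        gcongr with i
        rw [abs_mul, mul_comm]
        exact mul_le_mul (abs_le_lnorm x i) (norm_le_pi_norm q i) (abs_nonneg _) (lnorm_nonneg x)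
    _ = d * lnorm x * ‖q‖ := by simp [mul_assoc]

/-- The plane wave `q ↦ e^{2πi⟨q, x⟩}`, a character of the torus `ℝ^d / ℤ^d`. -/
def planeWave (x : Γd d) (q : Fin d → ℝ) : ℂ := exp ((2 * π * dotZ q x : ℝ) * I)

lemma norm_planeWave (x : Γd d) (q : Fin d → ℝ) : ‖planeWave x q‖ = 1 :=
  Complex.norm_exp_ofReal_mul_I _

lemma planeWave_add (x y : Γd d) (q : Fin d → ℝ) :
    planeWave (x + y) q = planeWave x q * planeWave y q := by
  simp only [planeWave, dotZ_add, ← Complex.exp_add]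
  congr 1
  push_cast
  ring

lemma planeWave_neg (x : Γd d) (q : Fin d → ℝ) :
    planeWave (-x) q = (starRingEnd ℂ) (planeWave x q) := by
  rw [planeWave, planeWave, dotZ_neg, ← Complex.exp_conj, map_mul, conj_ofReal, conj_I, mul_neg,
    ofReal_neg, neg_mul, mul_neg]

lemma latticePeriodic_planeWave (x : Γd d) : LatticePeriodic (planeWave x) := fun m q => by
  have hphase : ((2 * π * dotZ (q + fun i => (m i : ℝ)) x : ℝ) : ℂ) * I =
      ((2 * π * dotZ q x : ℝ) : ℂ) * I + ((∑ i, m i * x i : ℤ) : ℂ) * (2 * π * I) := by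
    simp only [dotZ, Pi.add_apply, add_mul, Finset.sum_add_distrib]
    push_cast
    ring
  rw [planeWave, hphase, Complex.exp_add, Complex.exp_int_mul_two_pi_mul_I, mul_one, planeWave]

lemma hasFDerivAt_planeWave (x : Γd d) (q : Fin d → ℝ) :
    HasFDerivAt (planeWave x) ((2 * π * I * planeWave x q) • dotZCLM x) q := by
  have hexp : planeWave x = fun q => exp (2 * π * I * dotZCLM x q) := by
    funext q
    rw [planeWave, dotZCLM_apply]
    congr 1
    push_cast
    ring
  have hderiv := ((dotZCLM x).hasFDerivAt (x := q)).const_mul (2 * π * I) |>.cexp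
  rw [hexp]
  simpa only [smul_smul, mul_comm] using hderiv

lemma continuous_planeWave (x : Γd d) : Continuous (planeWave x) :=
  continuous_iff_continuousAt.2 fun q => (hasFDerivAt_planeWave x q).continuousAt

end PlaneWaves

section TrigSeries

/-- The trigonometric series with coefficients `a`. -/
def trigSeries (a : Γd d → ℂ) (q : Fin d → ℝ) : ℂ := ∑' x, a x * planeWave x q

lemma latticePeriodic_trigSeries (a : Γd d → ℂ) : LatticePeriodic (trigSeries a) := fun m q => by
  simp only [trigSeries, latticePeriodic_planeWave _ m q]

lemma norm_le_norm_mul_one_add_lnorm (z : ℂ) (x : Γd d) : ‖z‖ ≤ ‖z‖ * (1 + lnorm x) :=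
  le_mul_of_one_le_right (norm_nonneg z) (le_add_of_nonneg_right (lnorm_nonneg x))

lemma norm_smul_dotZCLM_le (z : ℂ) (x : Γd d) (q : Fin d → ℝ) :
    ‖(z * (2 * π * I * planeWave x q)) • dotZCLM x‖ ≤ 2 * π * d * (‖z‖ * (1 + lnorm x)) := by
  have hfactor : ‖z * (2 * π * I * planeWave x q)‖ = 2 * π * ‖z‖ := by
    simp [norm_planeWave, abs_of_pos Real.pi_pos, mul_comm]
  calc _ ≤ 2 * π * ‖z‖ * (d * lnorm x) := by
        rw [norm_smul, hfactor]
        gcongr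
        exact norm_dotZCLM_le x
    _ = 2 * π * d * (‖z‖ * lnorm x) := by ring
    _ ≤ 2 * π * d * (‖z‖ * (1 + lnorm x)) := by
        gcongr
        exact le_add_of_nonneg_left zero_le_one

variable {a : Γd d → ℂ} (ha : Summable fun x => ‖a x‖ * (1 + lnorm x))

include ha

lemma summable_norm_of_weighted : Summable fun x => ‖a x‖ :=
  ha.of_nonneg_of_le (fun _ => norm_nonneg _) fun x => norm_le_norm_mul_one_add_lnorm (a x) x

lemma hasFDerivAt_trigSeries (q : Fin d → ℝ) : HasFDerivAt (trigSeries a)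
    (∑' x, (a x * (2 * π * I * planeWave x q)) • dotZCLM x) q := by
  refine hasFDerivAt_tsum (x₀ := q) (ha.mul_left (2 * π * d)) (fun x q => ?_)
    (fun x q => norm_smul_dotZCLM_le (a x) x q) ?_ q
  · simpa only [smul_smul] using (hasFDerivAt_planeWave x q).const_mul (a x)
  · exact .of_norm (by simpa [norm_planeWave] using summable_norm_of_weighted ha)

lemma contDiff_trigSeries : ContDiff ℝ 1 (trigSeries a) := by
  refine contDiff_one_iff_fderiv.2 ⟨fun q => (hasFDerivAt_trigSeries ha q).differentiableAt, ?_⟩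
  rw [funext fun q => (hasFDerivAt_trigSeries ha q).fderiv]
  refine continuous_tsum (fun x => ?_) (ha.mul_left (2 * π * d))
    fun x q => norm_smul_dotZCLM_le (a x) x q
  have := continuous_planeWave x
  fun_prop

lemma norm_trigSeries_le (q : Fin d → ℝ) :
    ‖trigSeries a q‖ ≤ ∑' x, ‖a x‖ * (1 + lnorm x) := by
  refine tsum_of_norm_bounded ha.hasSum fun x => ?_
  rw [norm_mul, norm_planeWave, mul_one]
  exact norm_le_norm_mul_one_add_lnorm (a x) x

lemma norm_fderiv_trigSeries_le (q : Fin d → ℝ) :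
    ‖fderiv ℝ (trigSeries a) q‖ ≤ 2 * π * d * ∑' x, ‖a x‖ * (1 + lnorm x) := by
  rw [(hasFDerivAt_trigSeries ha q).fderiv, ← tsum_mul_left]
  exact tsum_of_norm_bounded (ha.mul_left (2 * π * d)).hasSum
    fun x => norm_smul_dotZCLM_le (a x) x q

end TrigSeries

section MorseGradient

/-- The gradient `∇f`, as a vector of Euclidean space so that `‖∇f‖² = |∇f|²`. -/
def grad (f : (Fin d → ℝ) → ℝ) (q : Fin d → ℝ) : EuclideanSpace ℝ (Fin d) :=
  WithLp.toLp 2 fun k => pd f k q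

variable {f : (Fin d → ℝ) → ℝ}

lemma norm_grad_sq (f : (Fin d → ℝ) → ℝ) (q : Fin d → ℝ) : ‖grad f q‖ ^ 2 = gradSq f q :=
  EuclideanSpace.real_norm_sq_eq _

lemma fderiv_eq_zero_of_grad_eq_zero {q : Fin d → ℝ} (hq : grad f q = 0) : fderiv ℝ f q = 0 := by
  refine ContinuousLinearMap.coe_injective (LinearMap.pi_ext' fun k => LinearMap.ext_ring ?_)
  exact congrArg (· k) hq

lemma hasFDerivAt_grad (hf : ContDiff ℝ 2 f) (q : Fin d → ℝ) : HasFDerivAt (grad f)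
    ((EuclideanSpace.equiv (Fin d) ℝ).symm ∘L .pi fun k => fderiv ℝ (pd f k) q) q := by
  have hpi : HasFDerivAt (fun q k => pd f k q) (.pi fun k => fderiv ℝ (pd f k) q) q :=
    hasFDerivAt_pi.2 fun k => ((contDiff_pd hf k).differentiable one_ne_zero q).hasFDerivAt
  exact (EuclideanSpace.equiv (Fin d) ℝ).symm.hasFDerivAt.comp q hpi

lemma vecMul_hess_apply (f : (Fin d → ℝ) → ℝ) (q v : Fin d → ℝ) (k : Fin d) :
    Matrix.vecMul v (hess f q) k = fderiv ℝ (pd f k) q v := by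
  conv_rhs => rw [pi_eq_sum_univ' v, map_sum]
  simp only [map_smul]
  rfl

lemma IsMorse.exists_injective_fderiv_grad (hf : ContDiff ℝ 2 f) (hM : IsMorse f) (q : Fin d → ℝ)
    (hq : grad f q = 0) : ∃ g' : (Fin d → ℝ) →L[ℝ] EuclideanSpace ℝ (Fin d),
      HasFDerivAt (grad f) g' q ∧ Function.Injective g' := by
  refine ⟨_, hasFDerivAt_grad hf q, (injective_iff_map_eq_zero _).2 fun v hv => ?_⟩
  refine Matrix.eq_zero_of_vecMul_eq_zero (hM q (fderiv_eq_zero_of_grad_eq_zero hq)) ?_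
  funext k
  rw [vecMul_hess_apply]
  exact congrArg (· k) hv

lemma IsMorse.locallyIntegrable_inv_gradSq (hd : 3 ≤ d) (hf : ContDiff ℝ 2 f) (hM : IsMorse f) :
    LocallyIntegrable fun q => (gradSq f q)⁻¹ := by
  have hcont : Continuous (grad f) :=
    continuous_iff_continuousAt.2 fun q => (hasFDerivAt_grad hf q).continuousAt
  simpa only [norm_grad_sq] using locallyIntegrable_norm_pow_inv (k := 2) volume
    (hM.exists_injective_fderiv_grad hf) (by rw [Module.finrank_fin_fun]; omega) hcont

lemma IsMorse.ae_gradSq_pos [NeZero d] (hf : ContDiff ℝ 2 f) (hM : IsMorse f) :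
    ∀ᵐ q, 0 < gradSq f q := by
  filter_upwards [ae_ne_zero_of_injective_fderiv volume (hM.exists_injective_fderiv_grad hf)]
    with q hq
  rw [← norm_grad_sq]
  exact pow_pos (norm_pos_iff.2 hq) 2

end MorseGradient

section Rescaling

variable {f : (Fin d → ℝ) → ℝ} {c : ℝ}

lemma hess_comp_smul (f : (Fin d → ℝ) → ℝ) (c : ℝ) (q : Fin d → ℝ) :
    hess (fun q => f (c • q)) q = c ^ 2 • hess f (c • q) := by
  ext i j
  have hpd : (fun q => fderiv ℝ (fun q => f (c • q)) q (Pi.single j 1)) =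
      c • fun q => fderiv ℝ f (c • q) (Pi.single j 1) := by
    funext q
    rw [fderiv_comp_smul]
    rfl
  simp only [hess, Matrix.of_apply, Matrix.smul_apply, hpd]
  rw [fderiv_const_smul_field, Pi.smul_apply,
    fderiv_comp_smul (f := fun q => fderiv ℝ f q (Pi.single j 1)), smul_smul, ← sq]
  rfl

lemma IsMorse.comp_smul (hM : IsMorse f) (hc : c ≠ 0) : IsMorse fun q => f (c • q) := by
  intro q hq
  rw [fderiv_comp_smul, smul_eq_zero_iff_right hc] at hq
  rw [hess_comp_smul, Matrix.det_smul]
  exact mul_ne_zero (pow_ne_zero _ (pow_ne_zero _ hc)) (hM _ hq)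

end Rescaling

section TorusFourier

attribute [local instance] instMeasureSpaceUnitAddCircle
  instIsAddHaarMeasureUnitAddCircleVolume instIsProbabilityMeasureUnitAddCircleVolume

lemma mFourier_coe (x : Γd d) (q : Fin d → ℝ) :
    UnitAddTorus.mFourier x (fun i => (q i : UnitAddCircle)) = planeWave x q := by
  simp only [UnitAddTorus.mFourier, ContinuousMap.coe_mk, fourier_coe_apply, planeWave, dotZ,
    ← Complex.exp_sum]
  congr 1
  push_cast
  rw [Finset.mul_sum, Finset.sum_mul]
  exact Finset.sum_congr rfl fun i _ => by ring

lemma integral_planeWave (x : Γd d) :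
    ∫ q, planeWave x q ∂cellMeasure d = if x = 0 then 1 else 0 := by
  have htorus := UnitAddTorus.integral_preimage
    (fun t : UnitAddTorus (Fin d) => UnitAddTorus.mFourier x t) fun _ => -1 / 2
  have horthonormal :=
    orthonormal_iff_ite.mp (UnitAddTorus.orthonormal_mFourier (d := Fin d)) 0 x
  simp only [ContinuousMap.inner_toLp, UnitAddTorus.mFourier_zero, ContinuousMap.one_apply,
    map_one, mul_one] at horthonormal
  simp only [mFourier_coe] at htorus
  rw [cellMeasure, unitCell, ← htorus, horthonormal]
  simp only [eq_comm]

/-- The representative in the unit cell of a point of the torus. -/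
def cellRep (t : UnitAddTorus (Fin d)) : Fin d → ℝ :=
  (UnitAddTorus.measurableEquivPiIoc (fun _ : Fin d => (-1 / 2 : ℝ)) t).1

lemma cellRep_coe {q : Fin d → ℝ} (hq : q ∈ unitCell d) :
    cellRep (fun i => (q i : UnitAddCircle)) = q :=
  funext fun i => AddCircle.equivIoc_coe_of_mem (hq i)

lemma measurePreserving_cellRep : MeasurePreserving (cellRep (d := d)) volume (cellMeasure d) :=
  MeasurePreserving.comp
    ⟨measurable_subtype_coe, map_comap_subtype_coe (measurableSet_unitCell d) volume⟩
    (UnitAddTorus.measurePreserving_equivPiIoc fun _ => -1 / 2)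

lemma mFourierCoeff_comp_cellRep (f : (Fin d → ℝ) → ℂ) (x : Γd d) :
    UnitAddTorus.mFourierCoeff (f ∘ cellRep) x = ∫ q, planeWave (-x) q * f q ∂cellMeasure d := by
  rw [UnitAddTorus.mFourierCoeff_eq_integral _ _ fun _ => -1 / 2]
  refine setIntegral_congr_fun (measurableSet_unitCell d) fun q hq => ?_
  simp only [mFourier_coe, Function.comp_apply, cellRep_coe hq, smul_eq_mul]

lemma ae_eq_zero_of_integral_planeWave_mul_eq_zero {f : (Fin d → ℝ) → ℂ}
    (hf : MemLp f 2 (cellMeasure d))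
    (hcoeff : ∀ x, ∫ q, planeWave (-x) q * f q ∂cellMeasure d = 0) : f =ᵐ[cellMeasure d] 0 := by
  have hf' : MemLp (f ∘ cellRep) 2 := hf.comp_measurePreserving measurePreserving_cellRep
  have hzero : hf'.toLp = 0 := by
    refine (UnitAddTorus.mFourierBasis (d := Fin d)).repr.injective (lp.ext (funext fun x => ?_))
    have hcongr : UnitAddTorus.mFourierCoeff hf'.toLp x =
        UnitAddTorus.mFourierCoeff (f ∘ cellRep) x :=
      integral_congr_ae (hf'.coeFn_toLp.mono fun t ht => congrArg (_ • ·) ht)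
    rw [UnitAddTorus.mFourierBasis_repr, hcongr, mFourierCoeff_comp_cellRep, hcoeff, map_zero]
    rfl
  rw [← eLpNorm_eq_zero_iff hf.1 two_ne_zero,
    ← eLpNorm_comp_measurePreserving hf.1 measurePreserving_cellRep,
    eLpNorm_eq_zero_iff hf'.1 two_ne_zero]
  exact (MemLp.toLp_eq_toLp_iff hf' MemLp.zero).1 hzero

end TorusFourier

section FourierBasis

lemma memLp_planeWave (x : Γd d) : MemLp (planeWave x) 2 (cellMeasure d) :=
  .of_bound (continuous_planeWave x).aestronglyMeasurable 1
    (.of_forall fun q => (norm_planeWave x q).le)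

lemma memLp_ofReal_mul {E : (Fin d → ℝ) → ℝ} (hE : Continuous E) {f : (Fin d → ℝ) → ℂ}
    (hf : MemLp f 2 (cellMeasure d)) : MemLp (fun q => (E q : ℂ) * f q) 2 (cellMeasure d) := by
  obtain ⟨C, hC⟩ := exists_norm_le_on_unitCell hE
  refine hf.of_le_mul (c := C)
    ((Complex.continuous_ofReal.comp hE).aestronglyMeasurable.mul hf.1) ?_
  filter_upwards [ae_mem_unitCell d] with q hq
  rw [norm_mul, Complex.norm_real]
  exact mul_le_mul_of_nonneg_right (hC q hq) (norm_nonneg _)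

lemma integrable_planeWave_mul (x : Γd d) {f : (Fin d → ℝ) → ℂ}
    (hf : Integrable f (cellMeasure d)) :
    Integrable (fun q => planeWave x q * f q) (cellMeasure d) :=
  hf.bdd_mul (continuous_planeWave x).aestronglyMeasurable
    (.of_forall fun q => (norm_planeWave x q).le)

lemma inner_toLp_ofReal_mul_planeWave {E : (Fin d → ℝ) → ℝ} (hE : Continuous E) (x : Γd d)
    (f : Lp ℂ 2 (cellMeasure d)) :
    inner ℂ (memLp_ofReal_mul hE (memLp_planeWave x)).toLp f =
      ∫ q, planeWave (-x) q * (E q * f q) ∂cellMeasure d := by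
  rw [MeasureTheory.L2.inner_def]
  refine integral_congr_ae ?_
  filter_upwards [(memLp_ofReal_mul hE (memLp_planeWave x)).coeFn_toLp] with q hq
  rw [hq, planeWave_neg, RCLike.inner_apply, map_mul, Complex.conj_ofReal]
  ring

lemma inner_toLp_planeWave (x : Γd d) (f : Lp ℂ 2 (cellMeasure d)) :
    inner ℂ (memLp_planeWave x).toLp f = ∫ q, planeWave (-x) q * f q ∂cellMeasure d := by
  simpa using inner_toLp_ofReal_mul_planeWave continuous_one x f

lemma orthonormal_planeWave (d : ℕ) : Orthonormal ℂ fun x : Γd d => (memLp_planeWave x).toLp := by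
  refine orthonormal_iff_ite.2 fun x y => ?_
  have hinner : ∫ q, planeWave (-x) q * (memLp_planeWave y).toLp (planeWave y) q ∂cellMeasure d =
      ∫ q, planeWave (-x + y) q ∂cellMeasure d := by
    refine integral_congr_ae ?_
    filter_upwards [(memLp_planeWave y).coeFn_toLp] with q hq
    rw [hq, planeWave_add]
  rw [inner_toLp_planeWave, hinner, integral_planeWave]
  simp only [neg_add_eq_zero]

/-- The orthonormal basis of plane waves in `L²` of the unit cell. -/
def planeWaveBasis (d : ℕ) : HilbertBasis (Γd d) ℂ (Lp ℂ 2 (cellMeasure d)) :=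
  .mkOfOrthogonalEqBot (orthonormal_planeWave d) <| (Submodule.eq_bot_iff _).2 fun f hf =>
    (Lp.eq_zero_iff_ae_eq_zero).2 <|
      ae_eq_zero_of_integral_planeWave_mul_eq_zero (Lp.memLp f) fun x => by
        rw [← inner_toLp_planeWave]
        exact hf _ (Submodule.subset_span ⟨x, rfl⟩)

lemma planeWaveBasis_apply (x : Γd d) : planeWaveBasis d x = (memLp_planeWave x).toLp := by
  rw [planeWaveBasis, HilbertBasis.coe_mkOfOrthogonalEqBot]

/-- The function in `L²` of the unit cell whose Fourier coefficients are `ψ`. -/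
def fourierSum (ψ : L2 d) : Lp ℂ 2 (cellMeasure d) := (planeWaveBasis d).repr.symm ψ

lemma integral_planeWave_neg_mul_fourierSum (ψ : L2 d) (x : Γd d) :
    ∫ q, planeWave (-x) q * fourierSum ψ q ∂cellMeasure d = ψ x := by
  rw [← inner_toLp_planeWave, ← planeWaveBasis_apply, ← HilbertBasis.repr_apply_apply, fourierSum,
    LinearIsometryEquiv.apply_symm_apply]

lemma norm_apply_le_integral_norm_fourierSum (ψ : L2 d) (x : Γd d) :
    ‖ψ x‖ ≤ ∫ q, ‖fourierSum ψ q‖ ∂cellMeasure d := by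
  rw [← integral_planeWave_neg_mul_fourierSum]
  simpa only [norm_mul, norm_planeWave, one_mul] using norm_integral_le_integral_norm
    (μ := cellMeasure d) fun q => planeWave (-x) q * fourierSum ψ q

lemma integral_planeWave_neg_mul_trigSeries {a : Γd d → ℂ}
    (ha : Summable fun x => ‖a x‖) (y : Γd d) :
    ∫ q, planeWave (-y) q * trigSeries a q ∂cellMeasure d = a y := by
  have hterm : ∀ x, ∫ q, planeWave (-y) q * (a x * planeWave x q) ∂cellMeasure d =
      if x = y then a x else 0 := fun x => by
    simp only [mul_left_comm _ (a x), ← planeWave_add]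
    rw [integral_const_mul, integral_planeWave, mul_ite, mul_one, mul_zero]
    simp only [neg_add_eq_zero, eq_comm]
  have hsum := hasSum_integral_of_summable_integral_norm (μ := cellMeasure d)
    (F := fun x q => planeWave (-y) q * (a x * planeWave x q))
    (fun x => integrable_planeWave_mul _
      (((memLp_planeWave x).integrable one_le_two).const_mul (a x)))
    (by simpa only [norm_mul, norm_planeWave, one_mul, mul_one, integral_const, smul_eq_mul]
      using ha.mul_left _)
  simp only [hterm, tsum_mul_left] at hsum
  exact hsum.tsum_eq.symm.trans (tsum_ite_eq y a)

end FourierBasis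

section MultiplierSymbol

/-- The dispersion relation in the coordinates of the torus `ℝ^d / ℤ^d`. The sign is the one for
which the coefficients `fCoeff`, taken against `e^{+i⟨p, m⟩}`, become those against
`planeWave (-m)`. -/
def torusSymbol (e : (Fin d → ℝ) → ℝ) (q : Fin d → ℝ) : ℝ := e (-(2 * π) • q)

variable {e : (Fin d → ℝ) → ℝ}

lemma contDiff_torusSymbol {n : WithTop ℕ∞} (he : ContDiff ℝ n e) : ContDiff ℝ n (torusSymbol e) :=
  he.comp (contDiff_const_smul _)

lemma latticePeriodic_torusSymbol (he : Periodic2pi e) : LatticePeriodic (torusSymbol e) :=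
  fun m q => by
    rw [torusSymbol, torusSymbol, ← he (-(2 * π) • q) (-m)]
    congr 1
    ext i
    simp only [Pi.smul_apply, Pi.add_apply, Pi.neg_apply, smul_eq_mul, Int.cast_neg]
    ring

open scoped Pointwise in
lemma neg_two_pi_smul_Icc (d : ℕ) :
    -(2 * π) • Set.Icc (fun _ : Fin d => (-1 / 2 : ℝ)) (fun _ => -1 / 2 + 1) = torusBox d := by
  have hcoord : ∀ t : ℝ, (-1 / 2 ≤ (-(2 * π))⁻¹ * t ∧ (-(2 * π))⁻¹ * t ≤ -1 / 2 + 1) ↔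
      -π ≤ t ∧ t ≤ π := fun t => by
    have hscale : (-(2 * π))⁻¹ * t = -(t / (2 * π)) := by field_simp
    rw [show (-1 / 2 : ℝ) + 1 = 1 / 2 by norm_num, neg_div, ← abs_le, ← abs_le, hscale, abs_neg,
      abs_div, abs_of_pos Real.two_pi_pos, div_le_iff₀ Real.two_pi_pos]
    ring_nf
  ext p
  rw [Set.mem_smul_set_iff_inv_smul_mem₀ (neg_ne_zero.2 Real.two_pi_pos.ne')]
  simp only [torusBox, Set.mem_Icc, Pi.le_def, Set.mem_pi, Set.mem_univ, true_implies,
    Pi.smul_apply, smul_eq_mul, ← forall_and, hcoord]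

lemma fCoeff_eq_integral_torusSymbol (e : (Fin d → ℝ) → ℝ) (m : Γd d) :
    fCoeff e m = ∫ q, planeWave (-m) q * torusSymbol e q ∂cellMeasure d := by
  have hchange := Measure.setIntegral_comp_smul (volume : Measure (Fin d → ℝ))
    (fun p => (e p : ℂ) * exp (I * (dotZ p m : ℝ)))
    (Set.Icc (fun _ => (-1 / 2 : ℝ)) (fun _ => -1 / 2 + 1)) (neg_ne_zero.2 Real.two_pi_pos.ne')
  have hjacobian : |((-(2 * π)) ^ Module.finrank ℝ (Fin d → ℝ))⁻¹| = 1 / (2 * π) ^ d := by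
    rw [abs_inv, abs_pow, abs_neg, abs_of_pos Real.two_pi_pos, Module.finrank_fin_fun, one_div]
  rw [neg_two_pi_smul_Icc, hjacobian, Complex.real_smul] at hchange
  rw [fCoeff, ← hchange, cellMeasure_eq_restrict_Icc]
  congr 1
  ext q
  rw [mul_comm, planeWave, torusSymbol, dotZ_neg, smul_dotZ]
  congr 2
  push_cast
  ring

lemma IsMultiplier.apply_eq_integral (he : Continuous e) {H : L2 d →L[ℂ] L2 d}
    (hH : IsMultiplier e H) (ψ : L2 d) (x : Γd d) :
    H ψ x = ∫ q, planeWave (-x) q * (torusSymbol e q * fourierSum ψ q) ∂cellMeasure d := by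
  have hE : Continuous (torusSymbol e) := he.comp (continuous_const_smul _)
  have hcoord : H ψ x = ⟪delta x, H ψ⟫ := by
    rw [delta, lp.inner_single_left]
    simp only [map_one, RCLike.inner_apply, mul_one]
  have hlattice : HasSum (fun y => ψ y • ⟪delta x, H (delta y)⟫) ⟪delta x, H ψ⟫ := by
    have hdelta : HasSum (fun y => ψ y • delta y) ψ := by
      simpa only [delta, ← lp.single_smul, smul_eq_mul, mul_one] using
        lp.hasSum_single ENNReal.ofNat_ne_top ψ
    exact (hdelta.mapL ((innerSL ℂ (delta x)).comp H)).congr_fun fun y => by rw [map_smul]; rfl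
  have htorus := ((planeWaveBasis d).hasSum_repr_symm ψ).mapL
    (innerSL ℂ (memLp_ofReal_mul hE (memLp_planeWave x)).toLp)
  rw [hcoord, ← inner_toLp_ofReal_mul_planeWave hE]
  refine hlattice.unique (htorus.congr_fun fun y => ?_)
  rw [map_smul, planeWaveBasis_apply, innerSL_apply_apply, inner_toLp_ofReal_mul_planeWave hE, hH,
    fCoeff_eq_integral_torusSymbol]
  refine congrArg _ (integral_congr_ae ?_)
  filter_upwards [(memLp_planeWave y).coeFn_toLp] with q hq
  rw [hq, neg_sub, sub_eq_neg_add, planeWave_add]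
  ring

variable {V : Γd d → ℝ} {Hop Mv : L2 d →L[ℂ] L2 d}

lemma ae_torusSymbol_sub_smul_fourierSum_eq (he : Continuous e) (hHop : IsMultiplier e Hop)
    (hMv : IsMulOp V Mv) {ψ : L2 d} {μ : ℝ} (hψ : (Hop + Mv) ψ = (μ : ℂ) • ψ)
    (hVψ : Summable fun x => ‖-(V x * ψ x)‖ * (1 + lnorm x)) :
    ∀ᵐ q ∂cellMeasure d, (torusSymbol e q - μ) • fourierSum ψ q =
      trigSeries (fun x => -(V x * ψ x)) q := by
  have hE : Continuous (torusSymbol e) := he.comp (continuous_const_smul _)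
  have hu : MemLp (fun q => fourierSum ψ q) 2 (cellMeasure d) := Lp.memLp _
  have hEu := memLp_ofReal_mul hE hu
  have hμu := hu.const_mul (μ : ℂ)
  have hΦ : MemLp (trigSeries fun x => -(V x * ψ x)) 2 (cellMeasure d) :=
    .of_bound (contDiff_trigSeries hVψ).continuous.aestronglyMeasurable _
      (.of_forall (norm_trigSeries_le hVψ))
  have hint {g : (Fin d → ℝ) → ℂ} (hg : MemLp g 2 (cellMeasure d)) (x : Γd d) :=
    integrable_planeWave_mul (-x) (hg.integrable one_le_two)
  have hcoord (x : Γd d) : Hop ψ x + V x * ψ x = μ * ψ x := by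
    rw [← hMv ψ x]
    exact congrArg (· x) hψ
  have hzero := ae_eq_zero_of_integral_planeWave_mul_eq_zero ((hEu.sub hμu).sub hΦ) fun x => by
    have hdiff : Integrable (fun q => planeWave (-x) q * (torusSymbol e q * fourierSum ψ q)
        - planeWave (-x) q * (μ * fourierSum ψ q)) (cellMeasure d) := (hint hEu x).sub (hint hμu x)
    simp only [Pi.sub_apply, mul_sub]
    rw [integral_sub hdiff (hint hΦ x),
      integral_sub (hint hEu x) (hint hμu x),
      integral_planeWave_neg_mul_trigSeries (summable_norm_of_weighted hVψ),
      ← hHop.apply_eq_integral he]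
    simp only [mul_left_comm _ (μ : ℂ)]
    rw [integral_const_mul, integral_planeWave_neg_mul_fourierSum]
    linear_combination hcoord x
  filter_upwards [hzero] with q hq
  rw [Complex.real_smul, ofReal_sub, sub_mul]
  exact sub_eq_zero.1 hq

end MultiplierSymbol

section WeightedPotential

lemma Phi_one_one_le_Phi_two_two (V : Γd d → ℝ) : Phi 1 1 V ≤ Phi 2 2 V := by
  set b : Γd d → ℝ≥0∞ := fun x =>
    ENNReal.ofReal (|V x| ^ ((1 : ℝ) / (2 : ℕ)) * (1 + lnorm x) ^ 2)
  have hterm : ∀ x, ENNReal.ofReal (|V x| ^ ((1 : ℝ) / (1 : ℕ)) * (1 + lnorm x) ^ 1) ≤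
      b x * b x := fun x => by
    have hl := lnorm_nonneg x
    have hroot : |V x| ^ ((1 : ℝ) / (2 : ℕ)) * |V x| ^ ((1 : ℝ) / (2 : ℕ)) = |V x| := by
      rw [← Real.rpow_add_of_nonneg (abs_nonneg _) (by positivity) (by positivity)]
      norm_num
    rw [← ENNReal.ofReal_mul (by positivity), mul_mul_mul_comm, hroot, ← pow_add, Nat.cast_one,
      div_one, Real.rpow_one]
    gcongr
    · linarith
    · norm_num
  calc Phi 1 1 V ≤ ∑' x, b x * b x := by
        rw [Phi, pow_one]
        exact ENNReal.tsum_le_tsum hterm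
    _ ≤ ∑' x, b x * ∑' y, b y := ENNReal.tsum_le_tsum fun x => by gcongr; exact ENNReal.le_tsum x
    _ = Phi 2 2 V := by rw [ENNReal.tsum_mul_right, Phi, sq]

lemma summable_and_tsum_lt_of_Phi_one_one_lt {V : Γd d → ℝ} {c : ℝ}
    (hV : Phi 1 1 V < ENNReal.ofReal c) :
    (Summable fun x => |V x| * (1 + lnorm x)) ∧ ∑' x, |V x| * (1 + lnorm x) < c := by
  have hnonneg : ∀ x, 0 ≤ |V x| * (1 + lnorm x) := fun x =>
    mul_nonneg (abs_nonneg _) (one_add_lnorm_nonneg x)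
  have hPhi : Phi 1 1 V = ∑' x, ENNReal.ofReal (|V x| * (1 + lnorm x)) := by
    simp only [Phi, Nat.cast_one, div_one, Real.rpow_one, pow_one]
  rw [hPhi] at hV
  have hsummable : Summable fun x => |V x| * (1 + lnorm x) := by
    simpa only [ENNReal.toReal_ofReal (hnonneg _)] using
      ENNReal.summable_toReal (hV.trans ENNReal.ofReal_lt_top).ne
  rw [← ENNReal.ofReal_tsum_of_nonneg hnonneg hsummable] at hV
  exact ⟨hsummable, (ENNReal.ofReal_lt_ofReal_iff_of_nonneg (tsum_nonneg hnonneg)).1 hV⟩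

variable {V : Γd d → ℝ} (hV : Summable fun x => |V x| * (1 + lnorm x)) {ψ : Γd d → ℂ} {L : ℝ}
  (hψ : ∀ x, ‖ψ x‖ ≤ L)

include hψ in
lemma norm_neg_mul_mul_one_add_lnorm_le (V : Γd d → ℝ) (x : Γd d) :
    ‖-(V x * ψ x)‖ * (1 + lnorm x) ≤ L * (|V x| * (1 + lnorm x)) := by
  have hweight : 0 ≤ |V x| * (1 + lnorm x) :=
    mul_nonneg (abs_nonneg _) (one_add_lnorm_nonneg x)
  calc ‖-(V x * ψ x)‖ * (1 + lnorm x) = ‖ψ x‖ * (|V x| * (1 + lnorm x)) := by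
        rw [norm_neg, norm_mul, Complex.norm_real, Real.norm_eq_abs]
        ring
    _ ≤ L * (|V x| * (1 + lnorm x)) := mul_le_mul_of_nonneg_right (hψ x) hweight

include hV hψ

lemma summable_norm_neg_mul_mul_one_add_lnorm :
    Summable fun x => ‖-(V x * ψ x)‖ * (1 + lnorm x) :=
  (hV.mul_left L).of_nonneg_of_le
    (fun x => mul_nonneg (norm_nonneg _) (one_add_lnorm_nonneg x))
    (norm_neg_mul_mul_one_add_lnorm_le hψ V)

lemma tsum_norm_neg_mul_mul_one_add_lnorm_le :
    ∑' x, ‖-(V x * ψ x)‖ * (1 + lnorm x) ≤ L * ∑' x, |V x| * (1 + lnorm x) := by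
  rw [← tsum_mul_left]
  exact (summable_norm_neg_mul_mul_one_add_lnorm hV hψ).tsum_le_tsum
    (norm_neg_mul_mul_one_add_lnorm_le hψ V) (hV.mul_left L)

end WeightedPotential

section AbsenceOfEigenvalues

variable {e : (Fin d → ℝ) → ℝ}

lemma exists_two_mul_sum_abs_pd_add_abs_laplacian_le {E : (Fin d → ℝ) → ℝ} (hE : ContDiff ℝ 2 E) :
    ∃ C, ∀ q ∈ unitCell d, 2 * ∑ k, |pd E k q| + |laplacian E q| ≤ C := by
  have hcont : Continuous fun q => 2 * ∑ k, |pd E k q| + |laplacian E q| :=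
    ((continuous_finsetSum _ fun k _ => (continuous_pd (hE.of_le one_le_two) k).abs).const_mul
      2).add (continuous_laplacian hE).abs
  obtain ⟨C, hC⟩ := exists_norm_le_on_unitCell hcont
  exact ⟨C, fun q hq => (le_abs_self _).trans (hC q hq)⟩

lemma exists_integral_gradSq_mul_norm_fourierSum_sq_le (he : Periodic2pi e)
    (heC : ContDiff ℝ 2 e) : ∃ C : ℝ, ∀ (V : Γd d → ℝ) (Hop Mv : L2 d →L[ℂ] L2 d),
      IsMultiplier e Hop → IsMulOp V Mv → (Summable fun x => |V x| * (1 + lnorm x)) →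
      ∀ (ψ : L2 d) (μ : ℝ), (Hop + Mv) ψ = (μ : ℂ) • ψ →
        ∫ q, gradSq (torusSymbol e) q * ‖fourierSum ψ q‖ ^ 2 ∂cellMeasure d ≤
          C * (∑' x, |V x| * (1 + lnorm x)) * (∫ q, ‖fourierSum ψ q‖ ∂cellMeasure d) ^ 2 := by
  have hE : ContDiff ℝ 2 (torusSymbol e) := contDiff_torusSymbol heC
  obtain ⟨C, hC⟩ := exists_two_mul_sum_abs_pd_add_abs_laplacian_le hE
  refine ⟨C * (1 + 2 * π * d), fun V Hop Mv hHop hMv hV ψ μ hψ => ?_⟩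
  set L := ∫ q, ‖fourierSum ψ q‖ ∂cellMeasure d
  set S := ∑' x, |V x| * (1 + lnorm x)
  have hψL : ∀ x, ‖ψ x‖ ≤ L := norm_apply_le_integral_norm_fourierSum ψ
  have hVψ := summable_norm_neg_mul_mul_one_add_lnorm hV hψL
  have hVψ_le := tsum_norm_neg_mul_mul_one_add_lnorm_le hV hψL
  have hLS : 0 ≤ L * S := le_trans (tsum_nonneg fun x =>
    mul_nonneg (norm_nonneg _) (one_add_lnorm_nonneg x)) hVψ_le
  have hvalue (q : Fin d → ℝ) :
      ‖trigSeries (fun x => -(V x * ψ x)) q‖ ≤ (1 + 2 * π * d) * (L * S) :=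
    (norm_trigSeries_le hVψ q).trans <| hVψ_le.trans <|
      le_mul_of_one_le_left hLS (le_add_of_nonneg_right (by positivity))
  have hderiv (q : Fin d → ℝ) (k : Fin d) :
      ‖fderiv ℝ (trigSeries fun x => -(V x * ψ x)) q (Pi.single k 1)‖ ≤
        (1 + 2 * π * d) * (L * S) := by
    refine (ContinuousLinearMap.unit_le_opNorm _ (Pi.single k 1) ?_).trans ?_
    · rw [Pi.norm_single, norm_one]
    refine (norm_fderiv_trigSeries_le hVψ q).trans ?_
    exact mul_le_mul (le_add_of_nonneg_left zero_le_one) hVψ_le (tsum_nonneg fun x =>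
      mul_nonneg (norm_nonneg _) (one_add_lnorm_nonneg x)) (by positivity)
  have hvirial := integral_gradSq_mul_norm_sq_le (E := fun q => torusSymbol e q - μ) (C := C)
    (hE.sub contDiff_const) (fun m q => congrArg (· - μ) (latticePeriodic_torusSymbol he m q))
    (contDiff_trigSeries hVψ) (latticePeriodic_trigSeries _)
    (by simpa only [pd_sub_const, laplacian_sub_const] using hC) hvalue hderiv
    (Lp.memLp (fourierSum ψ)) (ae_torusSymbol_sub_smul_fourierSum_eq heC.continuous hHop hMv hψ hVψ)
  rw [gradSq_sub_const] at hvirial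
  exact hvirial.trans_eq (by ring)

lemma exists_sq_integral_norm_fourierSum_le (hd : 3 ≤ d) (he : Periodic2pi e)
    (heC : ContDiff ℝ 2 e) (heM : IsMorse e) :
    ∃ K : ℝ, ∀ (V : Γd d → ℝ) (Hop Mv : L2 d →L[ℂ] L2 d),
      IsMultiplier e Hop → IsMulOp V Mv → (Summable fun x => |V x| * (1 + lnorm x)) →
      ∀ (ψ : L2 d) (μ : ℝ), (Hop + Mv) ψ = (μ : ℂ) • ψ →
        (∫ q, ‖fourierSum ψ q‖ ∂cellMeasure d) ^ 2 ≤
          K * (∑' x, |V x| * (1 + lnorm x)) * (∫ q, ‖fourierSum ψ q‖ ∂cellMeasure d) ^ 2 := by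
  have : NeZero d := ⟨by omega⟩
  have hE : ContDiff ℝ 2 (torusSymbol e) := contDiff_torusSymbol heC
  have hEM : IsMorse (torusSymbol e) := heM.comp_smul (neg_ne_zero.2 Real.two_pi_pos.ne')
  obtain ⟨C, hC⟩ := exists_integral_gradSq_mul_norm_fourierSum_sq_le he heC
  refine ⟨(∫ q, (gradSq (torusSymbol e) q)⁻¹ ∂cellMeasure d) * C,
    fun V Hop Mv hHop hMv hV ψ μ hψ => ?_⟩
  have hu : MemLp (fourierSum ψ) 2 (cellMeasure d) := Lp.memLp _
  calc (∫ q, ‖fourierSum ψ q‖ ∂cellMeasure d) ^ 2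
      ≤ (∫ q, (gradSq (torusSymbol e) q)⁻¹ ∂cellMeasure d)
          * ∫ q, gradSq (torusSymbol e) q * ‖fourierSum ψ q‖ ^ 2 ∂cellMeasure d :=
        sq_integral_le_integral_inv_mul_integral (ae_restrict_of_ae (hEM.ae_gradSq_pos hE))
          (hu.integrable one_le_two).norm
          (integrable_cellMeasure (hEM.locallyIntegrable_inv_gradSq hd hE))
          (integrable_gradSq_mul_norm_sq (hE.of_le one_le_two) hu)
    _ ≤ _ := mul_le_mul_of_nonneg_left (hC V Hop Mv hHop hMv hV ψ μ hψ)
        (integral_nonneg fun q => inv_nonneg.2 (gradSq_nonneg _ q))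
    _ = _ := by ring

lemma Npp_eq_zero {H : L2 d →L[ℂ] L2 d}
    (hH : ∀ (ψ : L2 d) (μ : ℝ), H ψ = (μ : ℂ) • ψ → ψ = 0) : Npp H = 0 := by
  have heigvecs : eigvecs H = ∅ :=
    Set.eq_empty_iff_forall_notMem.2 fun ψ ⟨hψ, μ, hμ⟩ => hψ (hH ψ μ hμ)
  have hclosure : (Submodule.span ℂ (eigvecs H)).topologicalClosure = ⊥ := by
    rw [heigvecs, Submodule.span_empty]
    exact (isClosed_singleton (x := (0 : L2 d))).submodule_topologicalClosure_eq
  rw [Npp, hclosure]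
  exact rank_bot ℂ _

theorem statement13_general (hd : 3 ≤ d) (he : Periodic2pi e) (heC2 : ContDiff ℝ 2 e)
    (heM : IsMorse e) :
    ∃ c : ℝ, 0 < c ∧ ∀ (V : Γd d → ℝ) (Hop Mv : L2 d →L[ℂ] L2 d),
      IsMultiplier e Hop → IsMulOp V Mv → Phi 1 1 V < ENNReal.ofReal c → Npp (Hop + Mv) = 0 := by
  obtain ⟨K, hK⟩ := exists_sq_integral_norm_fourierSum_le hd he heC2 heM
  refine ⟨1 / (|K| + 1), by positivity, fun V Hop Mv hHop hMv hPhi => Npp_eq_zero fun ψ μ hψ => ?_⟩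
  obtain ⟨hV, hS⟩ := summable_and_tsum_lt_of_Phi_one_one_lt hPhi
  have hL := hK V Hop Mv hHop hMv hV ψ μ hψ
  set S := ∑' x, |V x| * (1 + lnorm x)
  have hS₀ : 0 ≤ S := tsum_nonneg fun x =>
    mul_nonneg (abs_nonneg _) (one_add_lnorm_nonneg x)
  have hKS : K * S < 1 := by
    rw [lt_div_iff₀ (by positivity)] at hS
    nlinarith [mul_le_mul_of_nonneg_right (le_abs_self K) hS₀]
  have hL₀ : ∫ q, ‖fourierSum ψ q‖ ∂cellMeasure d = 0 := by
    by_contra hne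
    exact absurd hL (not_le.2 (mul_lt_of_lt_one_left (sq_pos_of_ne_zero hne) hKS))
  refine lp.ext (funext fun x => norm_le_zero_iff.1 ?_)
  exact hL₀ ▸ norm_apply_le_integral_norm_fourierSum ψ x

end AbsenceOfEigenvalues

end Lattice

/-- Absence of eigenvalues for small `Φ_{2,2}(V)`.
There is `c(𝔢) > 0` such that `Φ_{2,2}(V) < c(𝔢)` implies `N_pp[𝔢,V] = 0`. -/
theorem statement13 (d : ℕ) (hd : 3 ≤ d)
    (e : (Fin d → ℝ) → ℝ) (he : IsDispersion e) (heC3 : ContDiff ℝ 3 e) (heM : CondM e) :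
    ∃ c : ℝ, 0 < c ∧
      ∀ (V : Γd d → ℝ) (Hop Mv : L2 d →L[ℂ] L2 d),
        IsMultiplier e Hop → IsMulOp V Mv →
        Phi 2 2 V < ENNReal.ofReal c →
        Npp (Hop + Mv) = 0 := by
  obtain ⟨c, hc, hNpp⟩ := statement13_general hd he.1 (heC3.of_le (by norm_num)) heM.1
  exact ⟨c, hc, fun V Hop Mv hHop hMv hPhi =>
    hNpp V Hop Mv hHop hMv ((Phi_one_one_le_Phi_two_two V).trans_lt hPhi)⟩

end LatSch
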